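/- Let β and γ be real numbers with (β, γ) ∈ Γ. Then some real number strictly greater than 1 is realizable for the parameters β and γ. -/

import Mathlib

open scoped BigOperators

/-- A finite undirected multigraph (self-loops and parallel edges permitted),
with vertices `Fin n` and edges given as a multiset of (ordered representatives of)
unordered pairs of vertices.  Since the edge weight below is symmetric, the
orientation of each pair is immaterial. -/
structure MultiGraph where
  n : ℕ
  edges : Multiset (Fin n × Fin n)

/-- The edge interaction: `A₀₀ = β`, `A₀₁ = A₁₀ = 1`, `A₁₁ = γ`
(spin `false` = 0, spin `true` = 1). -/
def edgeW (β γ : ℝ) (i j : Bool) : ℝ :=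
  if i = j then (if i then γ else β) else 1

/-- `[Z_{G,v}]_i` : the partition function (no external fields) restricted to
spin configurations with `σ v = i`. -/
def Zvert (β γ : ℝ) (G : MultiGraph) (v : Fin G.n) (i : Bool) : ℝ :=
  ∑ σ : Fin G.n → Bool,
    if σ v = i then (G.edges.map fun e => edgeW β γ (σ e.1) (σ e.2)).prod else 0

/-- A real number `r` is realizable for the parameters `β, γ` if some graph `G`
and vertex `v` satisfy `[Z_{G,v}]₀ ≠ 0` and `[Z_{G,v}]₁ / [Z_{G,v}]₀ = r`. -/
def Realizable (β γ r : ℝ) : Prop :=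
  ∃ (G : MultiGraph) (v : Fin G.n),
    Zvert β γ G v false ≠ 0 ∧ Zvert β γ G v true / Zvert β γ G v false = r

/-!
Take `m` leaves, each joined to the root by `k` parallel edges and carrying `l` loops. The leaves
contribute independently, so the ratio at the root is
`((β ^ l + γ ^ (k + l)) / (β ^ (k + l) + γ ^ l)) ^ m`. With `m = 2` a ratio of absolute value
greater than `1` is enough, which leaves three choices of `(k, l)`:

* `(2, 0)` when `β + γ < 0`, since then `β ^ 2 < γ ^ 2`;
* `(1, 1)` when `0 ≤ β + γ`, because
  `(β + γ ^ 2) ^ 2 - (β ^ 2 + γ) ^ 2 = (β - γ) (1 - β - γ) (β + γ + β ^ 2 + γ ^ 2)`;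
* `(1, 3)` when the previous denominator `β ^ 2 + γ` vanishes.
-/

/-- The rooted graph used as a gadget: the root is vertex `0`, and each of the `m` leaves
`j.succ` is joined to it by `k` parallel edges and carries `l` self-loops. -/
def loopedStar (m k l : ℕ) : MultiGraph where
  n := m + 1
  edges := ∑ j : Fin m,
    (Multiset.replicate k (0, j.succ) + Multiset.replicate l (j.succ, j.succ))

theorem prod_map_edges_loopedStar {M : Type*} [CommMonoid M] (m k l : ℕ)
    (w : Fin (m + 1) × Fin (m + 1) → M) :
    ((loopedStar m k l).edges.map w).prod =
      ∏ j : Fin m, w (0, j.succ) ^ k * w (j.succ, j.succ) ^ l := by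
  change (Multiset.mapAddMonoidHom w (∑ j : Fin m, _)).prod = _
  rw [map_sum, Multiset.prod_sum]
  simp

section

variable {β γ : ℝ}

theorem Zvert_zero_eq_sum_cons (m : ℕ) (E : Multiset (Fin (m + 1) × Fin (m + 1))) (i : Bool) :
    Zvert β γ ⟨m + 1, E⟩ (0 : Fin (m + 1)) i =
      ∑ τ : Fin m → Bool, (E.map fun e =>
        edgeW β γ ((Fin.cons i τ : Fin (m + 1) → Bool) e.1)
          ((Fin.cons i τ : Fin (m + 1) → Bool) e.2)).prod := by
  unfold Zvert
  rw [← (Fin.consEquiv fun _ : Fin (m + 1) => Bool).sum_comp, Fintype.sum_prod_type_right]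
  simp [Fin.consEquiv]

theorem Zvert_loopedStar (m k l : ℕ) (i : Bool) :
    Zvert β γ (loopedStar m k l) (0 : Fin (m + 1)) i =
      (∑ s : Bool, edgeW β γ i s ^ k * edgeW β γ s s ^ l) ^ m :=
  calc
    _ = ∑ τ : Fin m → Bool, ∏ j, edgeW β γ i (τ j) ^ k * edgeW β γ (τ j) (τ j) ^ l := by
      refine (Zvert_zero_eq_sum_cons m _ i).trans (Finset.sum_congr rfl fun τ _ => ?_)
      exact prod_map_edges_loopedStar m k l _
    _ = _ := (Fintype.sum_pow (fun s => edgeW β γ i s ^ k * edgeW β γ s s ^ l) m).symm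

theorem realizable_loopedStar_ratio (m k l : ℕ) (h : β ^ (k + l) + γ ^ l ≠ 0) :
    Realizable β γ (((β ^ l + γ ^ (k + l)) / (β ^ (k + l) + γ ^ l)) ^ m) := by
  have zero_spin : Zvert β γ (loopedStar m k l) (0 : Fin (m + 1)) false =
      (β ^ (k + l) + γ ^ l) ^ m := by
    simp [Zvert_loopedStar, edgeW, pow_add, add_comm]
  have one_spin : Zvert β γ (loopedStar m k l) (0 : Fin (m + 1)) true =
      (β ^ l + γ ^ (k + l)) ^ m := by
    simp [Zvert_loopedStar, edgeW, pow_add, add_comm]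
  exact ⟨loopedStar m k l, (0 : Fin (m + 1)), zero_spin ▸ pow_ne_zero m h,
    by rw [one_spin, zero_spin, div_pow]⟩

theorem exists_one_lt_realizable_of_abs_lt (k l : ℕ) (h₀ : β ^ (k + l) + γ ^ l ≠ 0)
    (h : |β ^ (k + l) + γ ^ l| < |β ^ l + γ ^ (k + l)|) :
    ∃ r : ℝ, 1 < r ∧ Realizable β γ r := by
  refine ⟨_, ?_, realizable_loopedStar_ratio 2 k l h₀⟩
  rwa [one_lt_sq_iff_one_lt_abs, abs_div, one_lt_div (abs_pos.2 h₀)]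

theorem exists_one_lt_realizable_of_pos_of_lt (k l : ℕ) (h₀ : 0 < β ^ (k + l) + γ ^ l)
    (h : β ^ (k + l) + γ ^ l < β ^ l + γ ^ (k + l)) :
    ∃ r : ℝ, 1 < r ∧ Realizable β γ r :=
  exists_one_lt_realizable_of_abs_lt k l h₀.ne' <|
    (abs_of_pos h₀).trans_lt (h.trans_le (le_abs_self _))

theorem exists_one_lt_realizable_of_add_neg (hγβ : γ < β) (hneg : β + γ < 0) :
    ∃ r : ℝ, 1 < r ∧ Realizable β γ r := by
  have hsq : β ^ 2 < γ ^ 2 := by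
    linarith [mul_pos_of_neg_of_neg hneg (sub_neg.2 hγβ), sq_sub_sq γ β]
  have hlt : β ^ 2 + 1 < 1 + γ ^ 2 := by linarith
  exact exists_one_lt_realizable_of_pos_of_lt 2 0
    (by simpa using (by positivity : 0 < β ^ 2 + 1)) (by simpa using hlt)

theorem exists_one_lt_realizable_of_add_nonneg (hγβ : γ < β) (hlt : β + γ < 1)
    (hnonneg : 0 ≤ β + γ) (hne : β ^ 2 + γ ≠ 0) :
    ∃ r : ℝ, 1 < r ∧ Realizable β γ r := by
  have hβ : 0 < β := by linarith
  have hpos : 0 < (β - γ) * (1 - (β + γ)) * (β + γ + β ^ 2 + γ ^ 2) :=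
    mul_pos (mul_pos (sub_pos.2 hγβ) (sub_pos.2 hlt)) (by positivity)
  have hsq : (β ^ 2 + γ) ^ 2 < (β + γ ^ 2) ^ 2 := by linarith
  apply exists_one_lt_realizable_of_abs_lt 1 1
  · simpa using hne
  · simpa using sq_lt_sq.1 hsq

theorem exists_one_lt_realizable_neg_sq (hβ : 0 < β) (hβ₁ : β < 1) :
    ∃ r : ℝ, 1 < r ∧ Realizable β (-β ^ 2) r := by
  have hden : 0 < β ^ 4 + (-β ^ 2) ^ 3 := by
    have : β ^ 6 < β ^ 4 := pow_lt_pow_right_of_lt_one₀ hβ hβ₁ (by norm_num)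
    linarith
  have hlt : β ^ 4 + (-β ^ 2) ^ 3 < β ^ 3 + (-β ^ 2) ^ 4 := by
    have : β ^ 4 < β ^ 3 := pow_lt_pow_right_of_lt_one₀ hβ hβ₁ (by norm_num)
    linarith [pow_pos hβ 6, pow_pos hβ 8]
  exact exists_one_lt_realizable_of_pos_of_lt 1 3 hden hlt

theorem stmt12_general (hγβ : γ < β) (hlt : β + γ < 1) (hne : (β, γ) ≠ ((1 : ℝ), (-1 : ℝ))) :
    ∃ r : ℝ, 1 < r ∧ Realizable β γ r := by
  rcases lt_or_ge (β + γ) 0 with hneg | hnonneg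
  · exact exists_one_lt_realizable_of_add_neg hγβ hneg
  by_cases hzero : β ^ 2 + γ = 0
  · obtain rfl : γ = -β ^ 2 := by linarith
    have hβ : 0 < β := by linarith
    have hβ_ne_one : β ≠ 1 := by
      rintro rfl
      norm_num at hne
    have hβ_le_one : β ≤ 1 := by nlinarith
    exact exists_one_lt_realizable_neg_sq hβ (hβ_le_one.lt_of_ne hβ_ne_one)
  · exact exists_one_lt_realizable_of_add_nonneg hγβ hlt hnonneg hzero

end

/-- For `(β, γ) ∈ Γ = {β > γ, −2 < β + γ < 1, γ < 0} \ {(1,−1)}`, some real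
number strictly greater than `1` is realizable. -/
theorem stmt12 (β γ : ℝ) (h1 : β > γ) (h2 : -2 < β + γ) (h3 : β + γ < 1)
    (h4 : γ < 0) (h5 : (β, γ) ≠ ((1 : ℝ), (-1 : ℝ))) :
    ∃ r : ℝ, 1 < r ∧ Realizable β γ r :=
  stmt12_general h1 h3 h5
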